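/- Let D be a unique factorization domain, let d ≥ 1, and let a₁, b₁, c₁, …, a_d, b_d, c_d ∈ D with gcd(a_i, b_i) = 1 for each i. Let Ψ : D[x₁,…,x_d] → D[x₁,…,x_{2d}] be the D-algebra homomorphism with Ψ(x_i) = a_i·x_i + b_i·x_{d+i} + c_i for i = 1,…,d. If f ∈ D[x₁,…,x_d] is irreducible in D[x₁,…,x_d], then Ψ(f) is irreducible in D[x₁,…,x_{2d}]. -/

import Mathlib

/-!
After a translation of the variables we may take `c = 0`, so that `Ψ` pulls `f` back along the
linear map `(x, y) ↦ (aᵢ xᵢ + bᵢ yᵢ)ᵢ`. As `Ψ` is injective, it is enough to show that every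
divisor `u` of `Ψ f` lies in the range of `Ψ`.

Translating `(xᵢ, yᵢ)` by `tᵢ (bᵢ, -aᵢ)`, with new variables `tᵢ`, fixes `Ψ f`, which thus has
degree `0` in `t`; then `u` has degree `0` in `t` too, so it is invariant under the translation.
For scalars `pᵢ`, `qᵢ` and `wᵢ = aᵢ pᵢ + bᵢ qᵢ`, the choice `tᵢ = pᵢ yᵢ - qᵢ xᵢ` moves
`wᵢ (xᵢ, yᵢ)` to `(aᵢ xᵢ + bᵢ yᵢ) (pᵢ, qᵢ)`. Hence `u (w x, w y) = Ψ h`, where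
`h z = u (p z, q z)`. It remains to remove the factor `w`. Restricting this identity to the lines
spanned by other vectors `(p'ᵢ, q'ᵢ)` shows that `w ^ m` divides `w' ^ m * hₘ` for each coefficient
`hₘ` of `h`. The `w'ᵢ` include the coprime elements `aᵢ` and `bᵢ`, so `w ^ m` divides `hₘ`, that
is, `h z = g (w z)` for some `g`, and then `u = Ψ g`.
-/

theorem dvd_of_dvd_mul_of_dvd_mul_of_isRelPrime {M : Type*} [CommMonoidWithZero M]
    [IsCancelMulZero M] [DecompositionMonoid M] {s x a b : M} (hab : IsRelPrime a b)
    (ha : s ∣ x * a) (hb : s ∣ x * b) : s ∣ x := by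
  obtain ⟨s₁, s₂, ⟨y, rfl⟩, hs₂a, rfl⟩ := exists_dvd_and_dvd_of_dvd_mul ha
  rcases eq_or_ne s₁ 0 with rfl | hs₁
  · simp only [zero_mul, dvd_refl]
  · rw [mul_assoc] at hb
    have hs₂ : s₂ ∣ y * b := (mul_dvd_mul_iff_left hs₁).1 hb
    exact mul_dvd_mul_left s₁ ((hab.of_dvd_left hs₂a).dvd_of_dvd_mul_right hs₂)

theorem dvd_of_forall_dvd_mul_prod_of_isRelPrime {ι R : Type*} [CommSemiring R]
    [IsCancelMulZero R] [DecompositionMonoid R] {a b : ι → R}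
    (hab : ∀ i, IsRelPrime (a i) (b i)) (m : ι → ℕ) (t : Finset ι) {s x : R}
    (h : ∀ p q : ι → R, s ∣ x * ∏ i ∈ t, (a i * p i + b i * q i) ^ m i) : s ∣ x := by
  classical
  induction t using Finset.induction_on with
  | empty => simpa using h 0 0
  | insert j t hj ih =>
    refine ih fun p q => ?_
    have hupdate (α β : R) :
        s ∣ (x * ∏ i ∈ t, (a i * p i + b i * q i) ^ m i) * (a j * α + b j * β) ^ m j := by
      have hprod :
          ∏ i ∈ t, (a i * Function.update p j α i + b i * Function.update q j β i) ^ m i =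
          ∏ i ∈ t, (a i * p i + b i * q i) ^ m i :=
        Finset.prod_congr rfl fun i hi => by
          have hij : i ≠ j := ne_of_mem_of_not_mem hi hj
          simp only [Function.update_of_ne hij]
      have hpq := h (Function.update p j α) (Function.update q j β)
      rw [Finset.prod_insert hj, hprod, Function.update_self, Function.update_self] at hpq
      rwa [mul_assoc, mul_comm (∏ i ∈ t, _)]
    exact dvd_of_dvd_mul_of_dvd_mul_of_isRelPrime ((hab j).pow (m := m j) (n := m j))
      (by simpa using hupdate 1 0) (by simpa using hupdate 0 1)

theorem irreducible_map_of_forall_dvd_mem_range {M N F : Type*} [CommMonoid M] [CommMonoid N]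
    [FunLike F M N] [MonoidHomClass F M N] {φ : F} (hφ : Function.Injective φ) {x : M}
    (hx : Irreducible x) (hdvd : ∀ u, u ∣ φ x → u ∈ Set.range φ) : Irreducible (φ x) := by
  refine ⟨fun hu => ?_, fun u v huv => ?_⟩
  · obtain ⟨v, hv⟩ := hu.exists_right_inv
    obtain ⟨y, rfl⟩ := hdvd v (IsUnit.of_mul_eq_one_right _ hv).dvd
    rw [← map_mul, ← map_one φ] at hv
    exact hx.not_isUnit (IsUnit.of_mul_eq_one _ (hφ hv))
  · obtain ⟨y, rfl⟩ := hdvd u (huv ▸ dvd_mul_right u v)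
    obtain ⟨z, rfl⟩ := hdvd v (huv ▸ dvd_mul_left v (φ y))
    rw [← map_mul] at huv
    exact (hx.isUnit_or_isUnit (hφ huv)).imp (fun h => h.map φ) (fun h => h.map φ)

section Substitutions

open MvPolynomial

section CommSemiring

variable {R σ : Type*} [CommSemiring R]

/-- The substitution `Xᵢ ↦ wᵢ Xᵢ`. -/
noncomputable def scaleVars (w : σ → R) : MvPolynomial σ R →ₐ[R] MvPolynomial σ R :=
  aeval fun i => C (w i) * X i

/-- The substitution `Xᵢ ↦ aᵢ xᵢ + bᵢ yᵢ`, where `xᵢ` and `yᵢ` stand for the variables indexed by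
`Sum.inl i` and `Sum.inr i`: the map `Ψ` of the theorem in the case `c = 0`. -/
noncomputable def linearSubst (a b : σ → R) : MvPolynomial σ R →ₐ[R] MvPolynomial (σ ⊕ σ) R :=
  aeval fun i => C (a i) * X (Sum.inl i) + C (b i) * X (Sum.inr i)

/-- The substitution `xᵢ ↦ pᵢ Xᵢ`, `yᵢ ↦ qᵢ Xᵢ`, that is, the restriction to the product over `i`
of the lines spanned by the vectors `(pᵢ, qᵢ)`. -/
noncomputable def restrictLines (p q : σ → R) : MvPolynomial (σ ⊕ σ) R →ₐ[R] MvPolynomial σ R :=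
  aeval (Sum.elim (fun i => C (p i) * X i) fun i => C (q i) * X i)

theorem scaleVars_X (w : σ → R) (i : σ) : scaleVars w (X i) = C (w i) * X i :=
  aeval_X _ i

theorem linearSubst_X (a b : σ → R) (i : σ) :
    linearSubst a b (X i) = C (a i) * X (Sum.inl i) + C (b i) * X (Sum.inr i) :=
  aeval_X _ i

theorem restrictLines_X_inl (p q : σ → R) (i : σ) :
    restrictLines p q (X (Sum.inl i)) = C (p i) * X i :=
  aeval_X _ _

theorem restrictLines_X_inr (p q : σ → R) (i : σ) :
    restrictLines p q (X (Sum.inr i)) = C (q i) * X i :=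
  aeval_X _ _

theorem scaleVars_monomial (w : σ → R) (m : σ →₀ ℕ) (r : R) :
    scaleVars w (monomial m r) = monomial m (r * m.prod fun i k => w i ^ k) := by
  rw [scaleVars, aeval_monomial, monomial_eq]
  simp only [mul_pow, Finsupp.prod_mul, algebraMap_eq, C_mul, map_finsuppProd, C_pow, mul_assoc]

theorem coeff_scaleVars (w : σ → R) (f : MvPolynomial σ R) (m : σ →₀ ℕ) :
    coeff m (scaleVars w f) = coeff m f * m.prod fun i k => w i ^ k := by
  classical
  induction f using MvPolynomial.induction_on' with
  | monomial n r =>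
    rw [scaleVars_monomial, coeff_monomial, coeff_monomial]
    split_ifs with hnm
    · rw [hnm]
    · rw [zero_mul]
  | add f g hf hg => rw [map_add, coeff_add, coeff_add, hf, hg, add_mul]

theorem scaleVars_injective [IsDomain R] {w : σ → R} (hw : ∀ i, w i ≠ 0) :
    Function.Injective (scaleVars w) := by
  intro f g hfg
  ext m
  have hm : (m.prod fun i k => w i ^ k) ≠ 0 :=
    Finset.prod_ne_zero_iff.2 fun i _ => pow_ne_zero _ (hw i)
  refine mul_right_cancel₀ hm ?_
  rw [← coeff_scaleVars, ← coeff_scaleVars, hfg]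

theorem mem_range_scaleVars_iff {w : σ → R} {f : MvPolynomial σ R} :
    f ∈ Set.range (scaleVars w) ↔ ∀ m, (m.prod fun i k => w i ^ k) ∣ coeff m f := by
  classical
  constructor
  · rintro ⟨g, rfl⟩ m
    exact coeff_scaleVars w g m ▸ dvd_mul_left _ _
  · intro h
    choose g hg using h
    refine ⟨∑ m ∈ f.support, monomial m (g m), ?_⟩
    ext m
    simp only [coeff_scaleVars, coeff_sum, coeff_monomial, Finset.sum_ite_eq']
    split_ifs with hm
    · rw [hg m, mul_comm]
    · rw [notMem_support_iff.1 hm, zero_mul]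

theorem mem_range_scaleVars_of_isRelPrime [IsCancelMulZero R] [DecompositionMonoid R]
    {a b w : σ → R} (hab : ∀ i, IsRelPrime (a i) (b i)) {h : MvPolynomial σ R}
    (hh : ∀ p q : σ → R, scaleVars (a * p + b * q) h ∈ Set.range (scaleVars w)) :
    h ∈ Set.range (scaleVars w) := by
  refine mem_range_scaleVars_iff.2 fun m =>
    dvd_of_forall_dvd_mul_prod_of_isRelPrime hab m m.support fun p q => ?_
  have hdvd := mem_range_scaleVars_iff.1 (hh p q) m
  rwa [coeff_scaleVars] at hdvd

theorem restrictLines_linearSubst (a b p q : σ → R) (f : MvPolynomial σ R) :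
    restrictLines p q (linearSubst a b f) = scaleVars (a * p + b * q) f := by
  suffices (restrictLines p q).comp (linearSubst a b) = scaleVars (a * p + b * q) from
    DFunLike.congr_fun this f
  ext1 i
  simp only [AlgHom.comp_apply, linearSubst_X, scaleVars_X, restrictLines_X_inl,
    restrictLines_X_inr, map_add, map_mul, algHom_C, algebraMap_eq, Pi.add_apply, Pi.mul_apply]
  ring

theorem restrictLines_scaleVars (w p q : σ → R) (u : MvPolynomial (σ ⊕ σ) R) :
    restrictLines p q (scaleVars (Sum.elim w w) u) = scaleVars w (restrictLines p q u) := by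
  suffices (restrictLines p q).comp (scaleVars (Sum.elim w w)) =
      (scaleVars w).comp (restrictLines p q) from DFunLike.congr_fun this u
  ext1 (i | i) <;>
  · simp only [AlgHom.comp_apply, scaleVars_X, restrictLines_X_inl, restrictLines_X_inr,
      Sum.elim_inl, Sum.elim_inr, map_mul, algHom_C, algebraMap_eq]
    ring

theorem linearSubst_scaleVars (a b w : σ → R) (f : MvPolynomial σ R) :
    linearSubst a b (scaleVars w f) = scaleVars (Sum.elim w w) (linearSubst a b f) := by
  suffices (linearSubst a b).comp (scaleVars w) =
      (scaleVars (Sum.elim w w)).comp (linearSubst a b) from DFunLike.congr_fun this f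
  ext1 i
  simp only [AlgHom.comp_apply, scaleVars_X, linearSubst_X, Sum.elim_inl, Sum.elim_inr,
    map_add, map_mul, algHom_C, algebraMap_eq]
  ring

theorem exists_mul_add_mul_ne_zero {a b : σ → R} (hab : ∀ i, a i ≠ 0 ∨ b i ≠ 0) :
    ∃ p q : σ → R, ∀ i, (a * p + b * q) i ≠ 0 := by
  have hex : ∀ i, ∃ α β : R, a i * α + b i * β ≠ 0 := fun i => by
    rcases hab i with ha | hb
    · exact ⟨1, 0, by simpa using ha⟩
    · exact ⟨0, 1, by simpa using hb⟩
  choose p q hpq using hex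
  exact ⟨p, q, hpq⟩

theorem linearSubst_injective [IsDomain R] {a b : σ → R} (hab : ∀ i, a i ≠ 0 ∨ b i ≠ 0) :
    Function.Injective (linearSubst a b) := by
  obtain ⟨p, q, hw⟩ := exists_mul_add_mul_ne_zero hab
  refine Function.Injective.of_comp (f := restrictLines p q) fun f g hfg => ?_
  simp only [Function.comp_apply, restrictLines_linearSubst] at hfg
  exact scaleVars_injective hw hfg

end CommSemiring

section CommRing

variable {R σ : Type*} [CommRing R]

/-- The substitution `Xᵢ ↦ Xᵢ + cᵢ`, as an automorphism of the polynomial ring. -/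
noncomputable def translateVars (c : σ → R) : MvPolynomial σ R ≃ₐ[R] MvPolynomial σ R :=
  AlgEquiv.ofAlgHom (aeval fun i => X i + C (c i)) (aeval fun i => X i - C (c i))
    (by ext1 i; simp [← algebraMap_eq]) (by ext1 i; simp [← algebraMap_eq])

/-- The substitution `xᵢ ↦ xᵢ + bᵢ tᵢ`, `yᵢ ↦ yᵢ - aᵢ tᵢ`, which translates along the kernel of
`(x, y) ↦ (aᵢ xᵢ + bᵢ yᵢ)ᵢ`. The parameters `tᵢ` are the outer variables of the target. -/
noncomputable def kernelTranslate (a b : σ → R) :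
    MvPolynomial (σ ⊕ σ) R →ₐ[R] MvPolynomial σ (MvPolynomial (σ ⊕ σ) R) :=
  aeval (Sum.elim (fun i => C (X (Sum.inl i)) + C (C (b i)) * X i)
    fun i => C (X (Sum.inr i)) - C (C (a i)) * X i)

theorem translateVars_X (c : σ → R) (i : σ) : translateVars c (X i) = X i + C (c i) :=
  aeval_X _ i

theorem kernelTranslate_X_inl (a b : σ → R) (i : σ) :
    kernelTranslate a b (X (Sum.inl i)) = C (X (Sum.inl i)) + C (C (b i)) * X i :=
  aeval_X _ _

theorem kernelTranslate_X_inr (a b : σ → R) (i : σ) :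
    kernelTranslate a b (X (Sum.inr i)) = C (X (Sum.inr i)) - C (C (a i)) * X i :=
  aeval_X _ _

theorem kernelTranslate_C (a b : σ → R) (r : R) : kernelTranslate a b (C r) = C (C r) :=
  (kernelTranslate a b).commutes r

theorem linearSubst_translateVars (a b c : σ → R) (f : MvPolynomial σ R) :
    linearSubst a b (translateVars c f) =
      aeval (fun i => C (a i) * X (Sum.inl i) + C (b i) * X (Sum.inr i) + C (c i)) f := by
  suffices (linearSubst a b).comp (translateVars c : MvPolynomial σ R →ₐ[R] MvPolynomial σ R) =
      aeval fun i => C (a i) * X (Sum.inl i) + C (b i) * X (Sum.inr i) + C (c i) from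
    DFunLike.congr_fun this f
  ext1 i
  simp only [AlgHom.comp_apply, AlgEquiv.coe_toAlgHom, translateVars_X, linearSubst_X, aeval_X,
    map_add, algHom_C, algebraMap_eq]

theorem kernelTranslate_linearSubst (a b : σ → R) (f : MvPolynomial σ R) :
    kernelTranslate a b (linearSubst a b f) = C (linearSubst a b f) := by
  induction f using MvPolynomial.induction_on with
  | C r => rw [algHom_C, algebraMap_eq, kernelTranslate_C]
  | add f g hf hg => simp only [map_add, hf, hg]
  | mul_X f i hf =>
    simp only [map_mul, hf, linearSubst_X, map_add, kernelTranslate_C, kernelTranslate_X_inl,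
      kernelTranslate_X_inr]
    ring

theorem eval_zero_kernelTranslate (a b : σ → R) (u : MvPolynomial (σ ⊕ σ) R) :
    eval 0 (kernelTranslate a b u) = u := by
  induction u using MvPolynomial.induction_on with
  | C r => rw [kernelTranslate_C, eval_C]
  | add u v hu hv => rw [map_add, map_add, hu, hv]
  | mul_X u i hu =>
    rcases i with i | i <;>
    simp only [map_mul, hu, kernelTranslate_X_inl, kernelTranslate_X_inr, map_add, map_sub, eval_C,
      eval_X, Pi.zero_apply, mul_zero, add_zero, sub_zero]

theorem eval₂_kernelTranslate (a b p q : σ → R) (u : MvPolynomial (σ ⊕ σ) R) :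
    eval₂ (scaleVars (Sum.elim (a * p + b * q) (a * p + b * q))).toRingHom
        (fun i => C (p i) * X (Sum.inr i) - C (q i) * X (Sum.inl i)) (kernelTranslate a b u) =
      linearSubst a b (restrictLines p q u) := by
  induction u using MvPolynomial.induction_on with
  | C r =>
    rw [kernelTranslate_C, eval₂_C, algHom_C, algebraMap_eq, algHom_C, algebraMap_eq]
    exact (scaleVars _).commutes r
  | add u v hu hv =>
    rw [map_add, eval₂_add, hu, hv, map_add (restrictLines p q), map_add (linearSubst a b)]
  | mul_X u i hu =>
    rw [map_mul, eval₂_mul, hu, map_mul (restrictLines p q), map_mul (linearSubst a b)]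
    rcases i with i | i <;>
    · simp only [kernelTranslate_X_inl, kernelTranslate_X_inr, restrictLines_X_inl,
        restrictLines_X_inr, eval₂_add, eval₂_sub, eval₂_mul, eval₂_C, eval₂_X,
        AlgHom.toRingHom_eq_coe, RingHom.coe_coe, scaleVars_X, linearSubst_X, map_mul, algHom_C,
        algebraMap_eq, Sum.elim_inl, Sum.elim_inr, Pi.add_apply, Pi.mul_apply, C_add]
      ring

theorem kernelTranslate_eq_C_of_dvd [IsDomain R] {a b : σ → R} {f : MvPolynomial σ R}
    (hf : linearSubst a b f ≠ 0) {u : MvPolynomial (σ ⊕ σ) R} (hu : u ∣ linearSubst a b f) :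
    kernelTranslate a b u = C u := by
  have hdvd : kernelTranslate a b u ∣ C (linearSubst a b f) :=
    kernelTranslate_linearSubst a b f ▸ map_dvd (kernelTranslate a b) hu
  obtain ⟨v, -, hv⟩ := (dvd_C_iff_exists hf).1 hdvd
  have huv : u = v := by
    rw [← eval_zero_kernelTranslate a b u, hv, eval_C]
  rw [hv, huv]

theorem mem_range_linearSubst_of_dvd [IsDomain R] [DecompositionMonoid R] {a b : σ → R}
    (hab : ∀ i, IsRelPrime (a i) (b i)) {f : MvPolynomial σ R} (hf : f ≠ 0)
    {u : MvPolynomial (σ ⊕ σ) R} (hu : u ∣ linearSubst a b f) :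
    u ∈ Set.range (linearSubst a b) := by
  have hab₀ : ∀ i, a i ≠ 0 ∨ b i ≠ 0 := fun i => (hab i).ne_zero_or_ne_zero
  have hΨf : linearSubst a b f ≠ 0 := (map_ne_zero_iff _ (linearSubst_injective hab₀)).2 hf
  obtain ⟨p, q, hw⟩ := exists_mul_add_mul_ne_zero hab₀
  set w := a * p + b * q
  have hscale : scaleVars (Sum.elim w w) u = linearSubst a b (restrictLines p q u) := by
    rw [← eval₂_kernelTranslate, kernelTranslate_eq_C_of_dvd hΨf hu, eval₂_C,
      AlgHom.toRingHom_eq_coe, RingHom.coe_coe]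
  obtain ⟨g, hg⟩ : restrictLines p q u ∈ Set.range (scaleVars w) :=
    mem_range_scaleVars_of_isRelPrime hab fun p' q' => ⟨restrictLines p' q' u, by
      rw [← restrictLines_scaleVars, hscale, restrictLines_linearSubst]⟩
  refine ⟨g, scaleVars_injective (w := Sum.elim w w) (Sum.forall.2 ⟨hw, hw⟩) ?_⟩
  rw [← linearSubst_scaleVars, hg, hscale]

end CommRing

end Substitutions

theorem irreducible_of_linear_subst_multivariate_general {D σ : Type*} [CommRing D] [IsDomain D]
    [DecompositionMonoid D] (a b c : σ → D) (hab : ∀ i, IsRelPrime (a i) (b i))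
    (f : MvPolynomial σ D) (hf : Irreducible f) :
    Irreducible
      (MvPolynomial.eval₂ MvPolynomial.C
        (fun i => MvPolynomial.C (a i) * MvPolynomial.X (Sum.inl i) +
          MvPolynomial.C (b i) * MvPolynomial.X (Sum.inr i) + MvPolynomial.C (c i)) f :
        MvPolynomial (σ ⊕ σ) D) := by
  have hinj : Function.Injective (linearSubst a b) :=
    linearSubst_injective fun i => (hab i).ne_zero_or_ne_zero
  have hg : Irreducible (translateVars c f) := hf.map (translateVars c)
  have hΨ : Irreducible (linearSubst a b (translateVars c f)) :=
    irreducible_map_of_forall_dvd_mem_range hinj hg fun _ hu =>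
      mem_range_linearSubst_of_dvd hab hg.ne_zero hu
  rwa [linearSubst_translateVars] at hΨ

/-- Let `D` be a UFD, `d ≥ 1`, and `a_i, b_i, c_i ∈ D` with
`gcd(a_i, b_i) = 1` for each `i`. Let `Ψ : D[x₁,…,x_d] → D[x₁,…,x_{2d}]` be the `D`-algebra
homomorphism with `Ψ(x_i) = a_i·x_i + b_i·x_{d+i} + c_i` (the `2d` variables being indexed by
`Fin d ⊕ Fin d`). If `f` is irreducible in `D[x₁,…,x_d]`, then `Ψ(f)` is irreducible in
`D[x₁,…,x_{2d}]`. -/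
theorem irreducible_of_linear_subst_multivariate (D : Type*) [CommRing D] [IsDomain D]
    [UniqueFactorizationMonoid D] (d : ℕ) (hd : 1 ≤ d)
    (a b c : Fin d → D) (hab : ∀ i, IsRelPrime (a i) (b i))
    (f : MvPolynomial (Fin d) D) (hf : Irreducible f) :
    Irreducible
      (MvPolynomial.eval₂ MvPolynomial.C
        (fun i => MvPolynomial.C (a i) * MvPolynomial.X (Sum.inl i) +
          MvPolynomial.C (b i) * MvPolynomial.X (Sum.inr i) + MvPolynomial.C (c i)) f :
        MvPolynomial (Fin d ⊕ Fin d) D) :=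
  irreducible_of_linear_subst_multivariate_general a b c hab f hf
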